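/- (Theorem 2.3, case 1, limit at +∞.) Let σ > 0 and let h : ℝ → (0, ∞) be continuous, monotone nondecreasing on (−∞, 0) and monotone nonincreasing on [0, ∞). Define F(y) = G(y, σ·h(y)). Then F(y) → 1 as y → +∞. -/

import Mathlib

/-- The CDF at `y` of a centered normal distribution with standard deviation `s`. -/
noncomputable def gaussCDF (y s : ℝ) : ℝ :=
  (Real.sqrt (2 * Real.pi * s ^ 2))⁻¹ * ∫ x in Set.Iic y, Real.exp (-x ^ 2 / (2 * s ^ 2))

/-!
Standardizing turns `G(y, s)` into `Φ(y / s)`, where `Φ` is the standard normal CDF. So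
`F(y) = Φ(y / (σ h(y)))` tends to `1` as soon as `y / (σ h(y)) → ∞`, i.e. as soon as
`h(y) = o(y)`; a nonnegative nonincreasing `h` is even bounded near `+∞`.
-/

open Asymptotics Filter MeasureTheory ProbabilityTheory Set Topology

theorem cdf_map_const_mul (μ : Measure ℝ) [IsProbabilityMeasure μ] {c : ℝ} (hc : 0 < c) (y : ℝ) :
    cdf (μ.map (c * ·)) y = cdf μ (y / c) := by
  have hmeas : Measurable (c * · : ℝ → ℝ) := measurable_const_mul c
  have : IsProbabilityMeasure (μ.map (c * ·)) :=
    Measure.isProbabilityMeasure_map hmeas.aemeasurable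
  rw [cdf_eq_real, cdf_eq_real, map_measureReal_apply hmeas measurableSet_Iic,
    preimage_const_mul_Iic₀ y hc]

theorem gaussCDF_eq_cdf_gaussianReal {s : ℝ} (hs : s ≠ 0) (y : ℝ) :
    gaussCDF y s = cdf (gaussianReal 0 (.mk (s ^ 2) (sq_nonneg s))) y := by
  have hv : NNReal.mk (s ^ 2) (sq_nonneg s) ≠ 0 :=
    fun h => pow_ne_zero 2 hs (congrArg NNReal.toReal h)
  have hnonneg : 0 ≤ ∫ x in Iic y, gaussianPDFReal 0 (.mk (s ^ 2) (sq_nonneg s)) x :=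
    integral_nonneg fun x => gaussianPDFReal_nonneg 0 _ x
  rw [cdf_eq_real, measureReal_def, gaussianReal_apply_eq_integral 0 hv,
    ENNReal.toReal_ofReal hnonneg]
  simp only [gaussCDF, gaussianPDFReal, sub_zero, NNReal.coe_mk, integral_const_mul]

theorem gaussCDF_eq_cdf_gaussianReal_zero_one {s : ℝ} (hs : 0 < s) (y : ℝ) :
    gaussCDF y s = cdf (gaussianReal 0 1) (y / s) := by
  rw [gaussCDF_eq_cdf_gaussianReal hs.ne', ← cdf_map_const_mul _ hs, gaussianReal_map_const_mul,
    mul_zero, mul_one]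

theorem tendsto_gaussCDF_nhds_one {α : Type*} {l : Filter α} {y s : α → ℝ}
    (hs : ∀ᶠ a in l, 0 < s a) (hys : Tendsto (fun a => y a / s a) l atTop) :
    Tendsto (fun a => gaussCDF (y a) (s a)) l (𝓝 1) := by
  refine ((tendsto_cdf_atTop (gaussianReal 0 1)).comp hys).congr' ?_
  filter_upwards [hs] with a ha
  exact (gaussCDF_eq_cdf_gaussianReal_zero_one ha (y a)).symm

theorem tendsto_div_atTop_of_isLittleO {α : Type*} {l : Filter α} {f g : α → ℝ}
    (hfg : f =o[l] g) (hf : ∀ᶠ a in l, 0 < f a) (hg : ∀ᶠ a in l, 0 < g a) :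
    Tendsto (fun a => g a / f a) l atTop := by
  have hpos : ∀ᶠ a in l, 0 < f a / g a := hf.and hg |>.mono fun _ ⟨ha, hb⟩ => div_pos ha hb
  have hzero : Tendsto (fun a => f a / g a) l (𝓝[>] 0) :=
    tendsto_nhdsWithin_iff.mpr ⟨hfg.tendsto_div_nhds_zero, hpos⟩
  simpa only [Pi.inv_def, inv_div] using hzero.inv_tendsto_nhdsGT_zero

theorem isBigO_one_atTop_of_antitoneOn_Ici {α : Type*} [Preorder α] {f : α → ℝ} {a : α}
    (hf : AntitoneOn f (Ici a)) (hf₀ : ∀ᶠ x in atTop, 0 ≤ f x) :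
    f =O[atTop] fun _ => (1 : ℝ) := by
  refine IsBigO.of_norm_eventuallyLE (g := fun _ => f a) ?_ |>.trans (isBigO_const_one ℝ _ _)
  filter_upwards [hf₀, eventually_ge_atTop a] with x hx hax
  rw [Real.norm_of_nonneg hx]
  exact hf self_mem_Ici hax hax

theorem random_limit_normal_stmt6_general
    (σ : ℝ) (hσ : 0 < σ) (h : ℝ → ℝ) (hpos : ∀ᶠ y in atTop, 0 < h y) (hlittle : h =o[atTop] id)
    (F : ℝ → ℝ) (hF : ∀ y, F y = gaussCDF y (σ * h y)) :
    Tendsto F atTop (𝓝 1) := by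
  have hscale : ∀ᶠ y in atTop, 0 < σ * h y := hpos.mono fun _ hy => mul_pos hσ hy
  have hratio : Tendsto (fun y => y / (σ * h y)) atTop atTop :=
    tendsto_div_atTop_of_isLittleO (hlittle.const_mul_left σ) hscale (eventually_gt_atTop 0)
  exact (tendsto_gaussCDF_nhds_one hscale hratio).congr fun y => (hF y).symm

/-- Theorem 2.3, case 1, limit at `+∞`: if `h` is positive, continuous, nondecreasing on
`(-∞, 0)` and nonincreasing on `[0, ∞)`, then the random limit normal function
`F(y) = G(y, σ h(y))` tends to `1` as `y → +∞`. -/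
theorem random_limit_normal_stmt6
    (σ : ℝ) (hσ : 0 < σ) (h : ℝ → ℝ) (hpos : ∀ y, 0 < h y) (hcont : Continuous h)
    (hmono : MonotoneOn h (Set.Iio 0)) (hanti : AntitoneOn h (Set.Ici 0))
    (F : ℝ → ℝ) (hF : ∀ y, F y = gaussCDF y (σ * h y)) :
    Filter.Tendsto F Filter.atTop (nhds 1) := by
  have hbdd := isBigO_one_atTop_of_antitoneOn_Ici hanti (.of_forall fun y => (hpos y).le)
  exact random_limit_normal_stmt6_general σ hσ h (.of_forall hpos)
    (hbdd.trans_isLittleO (isLittleO_const_id_atTop 1)) F hF
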